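/- arXiv:1812.10833 — 2 statements merged into one kernel-verified Lean document; each statement's English description precedes it below -/
import Mathlib

section
/- Let Γ be a countable amenable group acting by homeomorphisms on a compact metric space X, and let S ⊆ Γ be a subsemigroup of Γ with 1_Γ ∉ S. If every continuous function f ∈ C(X) is contained in the closed subalgebra of C(X) generated by {f ∘ s : s ∈ S} together with the constant functions, then the topological entropy of the action Γ ↷ X is zero. -/
/-!
The entropy is bounded by counting the points of finite sets `E i` separated along the Følner
sets `F i`.

If `f` took finitely many values, predictability would say that `f (g • x)` is a function of
finitely many `f (s • g • x)` with `s ∈ K ⊆ S`. The relation `g < h ↔ h * g⁻¹ ∈ S` is a strict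
partial order, so reading `F i` from the top downwards, only the values at the `K`-boundary of
`F i` are free, and there are `o(|F i|)` of them. For general `f` the prediction loses precision:
`f (g • x)` up to `ε` requires the earlier values up to some much smaller `δ`.

This is repaired by using functions `f = c ∘ (φ + t)`, where `c` is a Cantor-type staircase close
to the identity (`exists_staircase`): outside a set of density `2⁻ⁿ` its values are multiples of
`2⁻ⁿ`. A multiple of `2⁻ᴹ⁰` predicted with error less than `2⁻ᴹ⁰` from other such values is known
exactly and costs nothing. Any other value is recorded with `n` binary digits, where `n` is its
dyadic depth truncated at a level `M` with `2⁻ᴹ ≤ δ`. For a random shift `t`, the square of the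
depth has bounded expectation, uniformly in the point (`exists_staircase_cost`), so by Fatou's
lemma one `t` keeps the average squared depth over `E i × F i` bounded for infinitely many `i`
(`exists_shift`). This `t` is chosen before `M₀`, `K` and `M`. Since recorded depths exceed `M₀`,
their average is `O(1 / M₀)` whatever `δ` turns out to be; together with a Kraft-type count of codes
(`log_card_le_of_code`) this gives `log |E i| ≤ ε |F i|` (`log_card_separated_le`).
-/

open Filter MeasureTheory
open scoped ENNReal

/-- A Følner sequence for a countable group `Γ`: a sequence of nonempty finite subsets
`F i` such that `|g F_i \ F_i| / |F_i| → 0` for every `g ∈ Γ`. -/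
def IsFolner {Γ : Type*} [Group Γ] (F : ℕ → Finset Γ) : Prop :=
  (∀ i, (F i).Nonempty) ∧
    ∀ g : Γ, Tendsto (fun i => ((((fun h => g * h) '' ↑(F i) \ (↑(F i) : Set Γ)).ncard : ℝ) / (F i).card))
      atTop (nhds 0)

/-- An open cover of a topological space. -/
def IsOpenCover {X : Type*} [TopologicalSpace X] (U : Set (Set X)) : Prop :=
  (∀ u ∈ U, IsOpen u) ∧ ⋃₀ U = Set.univ

/-- Minimal cardinality of a finite subcover of a cover. -/
noncomputable def coverNum {X : Type*} (U : Set (Set X)) : ℕ :=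
  sInf {n | ∃ V : Finset (Set X), ↑V ⊆ U ∧ ⋃₀ (V : Set (Set X)) = Set.univ ∧ V.card = n}

/-- The join `⋁_{g ∈ F} g⁻¹ 𝒰` of an open cover along a finite subset of the acting group. -/
def coverJoin {Γ X : Type*} [Group Γ] [MulAction Γ X] (F : Finset Γ) (U : Set (Set X)) :
    Set (Set X) :=
  {v | ∃ u : Γ → Set X, (∀ g ∈ F, u g ∈ U) ∧ v = ⋂ g ∈ F, (fun x => g • x) ⁻¹' u g}

/-- Topological entropy of the action `Γ ↷ X` computed along the Følner sequence `F`: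
the supremum over open covers `𝒰` of `limsup_i log N(⋁_{g ∈ F_i} g⁻¹𝒰) / |F_i|`. -/
noncomputable def topEnt (Γ X : Type*) [Group Γ] [TopologicalSpace X] [MulAction Γ X]
    (F : ℕ → Finset Γ) : ℝ≥0∞ :=
  ⨆ (U : Set (Set X)) (_ : IsOpenCover U),
    Filter.limsup
      (fun i => ENNReal.ofReal (Real.log (coverNum (coverJoin (F i) U)) / (F i).card)) atTop

/-! ### A staircase function with dyadic values -/

/-- The doubled staircase: `stair x = 2 * h x`, where `h` commutes with integer translations,
is constant near the integers and has slope `2` on `[1/4, 3/4] + ℤ`. -/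
noncomputable def stair (x : ℝ) : ℝ :=
  2 * (x + (max 0 (min 1 (2 * Int.fract x - 1 / 2)) - Int.fract x))

lemma stair_continuous : Continuous stair := by
  have h : Continuous ((fun u : ℝ => max 0 (min 1 (2 * u - 1 / 2)) - u) ∘ Int.fract) := by
    apply ContinuousOn.comp_fract''
    · fun_prop
    · norm_num
  exact continuous_const.mul (continuous_id.add h)

lemma stair_add_one (x : ℝ) : stair (x + 1) = stair x + 2 := by
  unfold stair; rw [Int.fract_add_one]; ring

lemma stair_int (z : ℤ) : stair z = 2 * z := by
  unfold stair; rw [Int.fract_intCast]; norm_num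

lemma stair_abs_sub (x : ℝ) : |stair x - 2 * x| ≤ 1 := by
  have h0 := Int.fract_nonneg x
  have h1 := (Int.fract_lt_one x).le
  unfold stair
  generalize Int.fract x = u at *
  rw [abs_le]
  rcases max_cases 0 (min 1 (2 * u - 1 / 2)) with h | h <;>
  rcases min_cases 1 (2 * u - 1 / 2) with h' | h' <;> constructor <;> linarith

lemma stair_low {x : ℝ} (h0 : 0 ≤ x) (h1 : x ≤ 1 / 4) : stair x = 0 := by
  have : Int.fract x = x := Int.fract_eq_self.2 ⟨h0, by linarith⟩
  rw [stair, this, min_eq_right (by linarith), max_eq_left (by linarith)]; ring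

lemma stair_mid {x : ℝ} (h0 : 1 / 4 ≤ x) (h1 : x ≤ 3 / 4) : stair x = 4 * x - 1 := by
  have : Int.fract x = x := Int.fract_eq_self.2 ⟨by linarith, by linarith⟩
  rw [stair, this, min_eq_right (by linarith), max_eq_right (by linarith)]; ring

lemma stair_high {x : ℝ} (h0 : 3 / 4 ≤ x) (h1 : x ≤ 1) : stair x = 2 := by
  rcases h1.lt_or_eq with h1 | rfl
  · have : Int.fract x = x := Int.fract_eq_self.2 ⟨by linarith, h1⟩
    rw [stair, this, min_eq_left (by linarith), max_eq_right (by linarith)]; ring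
  · simpa using stair_int 1

lemma stair_iter_add_one (n : ℕ) (x : ℝ) : stair^[n] (x + 1) = stair^[n] x + 2 ^ n := by
  have key (m : ℕ) (y : ℝ) : stair (y + m) = stair y + 2 * m := by
    induction m with
    | zero => simp
    | succ m ih => push_cast; rw [← add_assoc, stair_add_one, ih]; ring
  induction n with
  | zero => simp
  | succ n ih =>
    rw [Function.iterate_succ_apply', Function.iterate_succ_apply', ih]
    have := key (2 ^ n) (stair^[n] x)
    push_cast at this
    rw [this]; ring

/-- The points whose orbit under `stair` is not integral at time `n`. -/
def stairBad (n : ℕ) : Set ℝ := {x | stair^[n] x ∉ Set.range ((↑) : ℤ → ℝ)}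

lemma stairBad_measurable (n : ℕ) : MeasurableSet (stairBad n) := by
  have : IsClosed (Set.range ((↑) : ℤ → ℝ)) := Int.isClosedEmbedding_coe_real.isClosed_range
  exact ((this.preimage (stair_continuous.iterate n)).isOpen_compl).measurableSet

lemma stairBad_periodic (n : ℕ) : Function.Periodic ((stairBad n).indicator (1 : ℝ → ℝ)) 1 := by
  intro x
  have : x + 1 ∈ stairBad n ↔ x ∈ stairBad n := by
    simp only [stairBad, Set.mem_ofPred_eq, stair_iter_add_one, Set.mem_range, not_iff_not]
    constructor
    · rintro ⟨z, hz⟩; exact ⟨z - 2 ^ n, by push_cast; linarith⟩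
    · rintro ⟨z, hz⟩; exact ⟨z + 2 ^ n, by push_cast; linarith⟩
  by_cases h : x ∈ stairBad n
  · rw [Set.indicator_of_mem (this.2 h), Set.indicator_of_mem h]; rfl
  · rw [Set.indicator_of_notMem (fun h' => h (this.1 h')), Set.indicator_of_notMem h]

lemma stairBad_intervalIntegrable (n : ℕ) (a b : ℝ) :
    IntervalIntegrable ((stairBad n).indicator (1 : ℝ → ℝ)) volume a b := by
  have h : IntervalIntegrable (1 : ℝ → ℝ) volume a b := intervalIntegrable_const
  exact ⟨h.1.indicator (stairBad_measurable n), h.2.indicator (stairBad_measurable n)⟩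

/-- Each iteration halves the non-integral set: on a unit period `stair` is constant (and
integral) on measure `1/2`, and stretches the rest linearly over two periods. -/
lemma stairBad_integral (n : ℕ) (a : ℝ) :
    ∫ x in a..a + 1, (stairBad n).indicator (1 : ℝ → ℝ) x ≤ (1 / 2) ^ n := by
  induction n generalizing a with
  | zero =>
    have := intervalIntegral.integral_mono_on (μ := volume) (a := a) (b := a + 1) (by linarith)
      (stairBad_intervalIntegrable 0 a (a + 1)) (intervalIntegrable_const (c := (1 : ℝ)))
      (fun x _ => Set.indicator_le_self' (fun _ _ => zero_le_one) x)
    simpa using this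
  | succ n ih =>
    rw [(stairBad_periodic (n + 1)).intervalIntegral_add_eq a 0, zero_add]
    have hI := stairBad_intervalIntegrable (n + 1)
    rw [← intervalIntegral.integral_add_adjacent_intervals (hI 0 (1 / 4)) (hI (1 / 4) 1),
      ← intervalIntegral.integral_add_adjacent_intervals (hI (1 / 4) (3 / 4)) (hI (3 / 4) 1)]
    have hmem (x : ℝ) : x ∈ stairBad (n + 1) ↔ stair x ∈ stairBad n := by
      simp [stairBad, Function.iterate_succ_apply]
    have hbase (m : ℕ) (z : ℤ) : (z : ℝ) ∉ stairBad m := by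
      simp only [stairBad, Set.mem_ofPred_eq, not_not]
      induction m generalizing z with
      | zero => exact ⟨z, rfl⟩
      | succ m ih2 =>
        rw [Function.iterate_succ_apply, stair_int]
        simpa using ih2 (2 * z)
    have h1 : ∫ x in (0 : ℝ)..1 / 4, (stairBad (n + 1)).indicator (1 : ℝ → ℝ) x = 0 := by
      rw [intervalIntegral.integral_congr (g := fun _ => (0 : ℝ)), intervalIntegral.integral_zero]
      intro x hx
      rw [Set.uIcc_of_le (by norm_num)] at hx
      refine Set.indicator_of_notMem ?_ _
      rw [hmem, stair_low hx.1 hx.2]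
      simpa using hbase n 0
    have h3 : ∫ x in (3 / 4 : ℝ)..1, (stairBad (n + 1)).indicator (1 : ℝ → ℝ) x = 0 := by
      rw [intervalIntegral.integral_congr (g := fun _ => (0 : ℝ)), intervalIntegral.integral_zero]
      intro x hx
      rw [Set.uIcc_of_le (by norm_num)] at hx
      refine Set.indicator_of_notMem ?_ _
      rw [hmem, stair_high hx.1 hx.2]
      simpa using hbase n 2
    have h2 : ∫ x in (1 / 4 : ℝ)..3 / 4, (stairBad (n + 1)).indicator (1 : ℝ → ℝ) x
        = ∫ x in (1 / 4 : ℝ)..3 / 4, (stairBad n).indicator (1 : ℝ → ℝ) (4 * x - 1) := by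
      apply intervalIntegral.integral_congr
      intro x hx
      rw [Set.uIcc_of_le (by norm_num)] at hx
      have := hmem x
      rw [stair_mid hx.1 hx.2] at this
      by_cases h : x ∈ stairBad (n + 1)
      · simp [Set.indicator_of_mem h, Set.indicator_of_mem (this.1 h)]
      · simp [Set.indicator_of_notMem h, Set.indicator_of_notMem (fun h' => h (this.2 h'))]
    rw [h1, h2, h3, intervalIntegral.integral_comp_mul_sub _ (by norm_num)]
    have hJ := stairBad_intervalIntegrable n
    have h4 := intervalIntegral.integral_add_adjacent_intervals (hJ 0 1) (hJ 1 2)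
    have i1 := ih 0
    have i2 := ih 1
    norm_num at i1 i2 h4 ⊢
    rw [← h4, pow_succ]
    linarith

/-- A continuous function uniformly close to the identity whose values are, outside a set of
density `2⁻ⁿ`, integer multiples of `2⁻ⁿ`. -/
lemma exists_staircase : ∃ c : ℝ → ℝ, Continuous c ∧ (∀ x, |c x - x| ≤ 1) ∧
    ∀ (n : ℕ) (a : ℝ), volume ({t | ¬ ∃ z : ℤ, 2 ^ n * c (a + t) = z} ∩ Set.Ioc 0 1)
      ≤ ENNReal.ofReal ((1 / 2) ^ n) := by
  let e : ℕ → ℝ → ℝ := fun n x => (1 / 2) * (1 / 2) ^ n * (stair (stair^[n] x) - 2 * stair^[n] x)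
  have hsum : HasSum (fun n : ℕ => (1 / 2 : ℝ) * (1 / 2) ^ n) 1 := by
    simpa using hasSum_geometric_two.mul_left (1 / 2 : ℝ)
  have he (n : ℕ) (x : ℝ) : ‖e n x‖ ≤ (1 / 2) * (1 / 2) ^ n := by
    rw [Real.norm_eq_abs, abs_mul, abs_of_pos (by positivity)]
    exact mul_le_of_le_one_right (by positivity) (stair_abs_sub _)
  have hpart (n : ℕ) (x : ℝ) : x + ∑ k ∈ Finset.range n, e k x = (1 / 2) ^ n * stair^[n] x := by
    induction n with
    | zero => simp
    | succ n ih =>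
      rw [Finset.sum_range_succ, ← add_assoc, ih, Function.iterate_succ_apply']
      simp only [e]; ring
  refine ⟨fun x => x + ∑' n, e n x, ?_, ?_, ?_⟩
  · refine continuous_id.add (continuous_tsum (fun n => ?_) hsum.summable he)
    have h1 := stair_continuous.iterate n
    have h2 := stair_continuous
    fun_prop
  · intro x
    simpa using tsum_of_norm_bounded hsum (fun n => he n x)
  · intro n a
    have hsub : {t | ¬ ∃ z : ℤ, 2 ^ n * ((a + t) + ∑' n, e n (a + t)) = z} ∩ Set.Ioc 0 1
        ⊆ (fun t => a + t) ⁻¹' (stairBad n ∩ Set.Ioc a (a + 1)) := by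
      rintro t ⟨ht, h0, h1⟩
      refine ⟨?_, by simpa using h0, by simpa using h1⟩
      rintro ⟨z, hz⟩
      refine ht ⟨z, ?_⟩
      have hlater (m : ℕ) : stair^[n + m] (a + t) = ((2 ^ m * z : ℤ) : ℝ) := by
        induction m with
        | zero => simp [hz]
        | succ m ih =>
          rw [← add_assoc, Function.iterate_succ_apply', ih, stair_int]; push_cast; ring
      rw [tsum_eq_sum (s := Finset.range n), hpart, ← hz, ← mul_assoc, ← mul_pow]
      · norm_num
      · intro k hk
        obtain ⟨m, rfl⟩ := Nat.exists_eq_add_of_le (not_lt.1 (fun h => hk (Finset.mem_range.2 h)))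
        simp only [e]
        rw [hlater, stair_int]; ring
    refine (measure_mono hsub).trans ?_
    rw [measure_preimage_add, ← ENNReal.ofReal_toReal (a := volume _)]
    · apply ENNReal.ofReal_le_ofReal
      refine le_of_eq_of_le ?_ (stairBad_integral n a)
      rw [intervalIntegral.integral_of_le (by linarith), integral_indicator_one
        (stairBad_measurable n), measureReal_restrict_apply (stairBad_measurable n)]
      rfl
    · exact ((measure_mono Set.inter_subset_right).trans_lt measure_Ioc_lt_top).ne

/-! ### Dyadic values and their cost -/

/-- `v` is an integer multiple of `2⁻ⁿ`. -/
def IsDyadic (n : ℕ) (v : ℝ) : Prop := ∃ z : ℤ, 2 ^ n * v = z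

lemma IsDyadic.mono {m n : ℕ} {v : ℝ} (h : IsDyadic m v) (hmn : m ≤ n) : IsDyadic n v := by
  obtain ⟨z, hz⟩ := h
  obtain ⟨k, rfl⟩ := Nat.exists_eq_add_of_le hmn
  exact ⟨2 ^ k * z, by push_cast; rw [← hz]; ring⟩

open Classical in
/-- The square of the least `n` such that `v` is a multiple of `2⁻ⁿ` (infinite for non-dyadic
`v`), written as a sum of odd numbers so that its integral is a series of measures. -/
noncomputable def dyadicCost (v : ℝ) : ℝ≥0∞ :=
  ∑' n : ℕ, if IsDyadic n v then 0 else (2 * n + 1 : ℝ≥0∞)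

lemma sq_le_dyadicCost {N : ℕ} {v : ℝ} (h : ∀ j < N, ¬ IsDyadic j v) :
    (N : ℝ≥0∞) ^ 2 ≤ dyadicCost v := by
  classical
  have hodd : (N : ℝ≥0∞) ^ 2 = ∑ n ∈ Finset.range N, (2 * n + 1 : ℝ≥0∞) := by
    clear h
    induction N with
    | zero => simp
    | succ N ih => rw [Finset.sum_range_succ, ← ih]; push_cast; ring
  rw [hodd]
  refine le_trans (le_of_eq ?_) (ENNReal.sum_le_tsum (Finset.range N))
  refine Finset.sum_congr rfl fun n hn => ?_
  rw [if_neg (h n (Finset.mem_range.1 hn))]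

lemma isDyadic_measurable (n : ℕ) : MeasurableSet {v | IsDyadic n v} := by
  have : IsClosed (Set.range ((↑) : ℤ → ℝ)) := Int.isClosedEmbedding_coe_real.isClosed_range
  have h2 := (this.preimage (f := fun v : ℝ => 2 ^ n * v) (by fun_prop)).measurableSet
  convert h2 using 1
  ext v; simp [IsDyadic, eq_comm]

lemma dyadicCost_measurable : Measurable dyadicCost := by
  classical
  refine Measurable.tsum fun n => ?_
  exact Measurable.ite (isDyadic_measurable n) measurable_const measurable_const

/-- The staircase applied to a randomly shifted point has finite expected cost, uniformly in
the point. -/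
lemma exists_staircase_cost : ∃ c : ℝ → ℝ, Continuous c ∧ (∀ x, |c x - x| ≤ 1) ∧
    ∃ C : ℝ≥0∞, C ≠ ⊤ ∧ ∀ a, ∫⁻ t in Set.Ioc 0 1, dyadicCost (c (a + t)) ≤ C := by
  classical
  obtain ⟨c, hc, hc1, hv⟩ := exists_staircase
  refine ⟨c, hc, hc1, ∑' n : ℕ, ENNReal.ofReal ((2 * n + 1) * (1 / 2) ^ n), ?_, fun a => ?_⟩
  · rw [← ENNReal.ofReal_tsum_of_nonneg]
    · exact ENNReal.ofReal_ne_top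
    · intro n; positivity
    · have h1 := summable_pow_mul_geometric_of_norm_lt_one (R := ℝ) 1
        (r := 1 / 2) (by norm_num)
      have h2 := summable_geometric_two
      refine ((h1.mul_left 2).add h2).congr fun n => ?_
      ring
  · unfold dyadicCost
    have hm (n : ℕ) : MeasurableSet {t | IsDyadic n (c (a + t))} :=
      (isDyadic_measurable n).preimage (f := fun t => c (a + t)) (by fun_prop)
    rw [lintegral_tsum]
    · refine ENNReal.tsum_le_tsum fun n => ?_
      have : (fun t => if IsDyadic n (c (a + t)) then 0 else (2 * n + 1 : ℝ≥0∞))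
          = {t | IsDyadic n (c (a + t))}ᶜ.indicator (fun _ => (2 * n + 1 : ℝ≥0∞)) := by
        ext t
        by_cases h : IsDyadic n (c (a + t)) <;> simp [h]
      rw [this, lintegral_indicator_const (hm n).compl, Measure.restrict_apply (hm n).compl,
        ENNReal.ofReal_mul (by positivity)]
      refine mul_le_mul' (le_of_eq ?_) (hv n a)
      rw [ENNReal.ofReal_add (by positivity) zero_le_one, ENNReal.ofReal_mul (by norm_num)]
      simp
    · intro n
      exact (Measurable.ite (hm n) measurable_const measurable_const).aemeasurable

/-! ### Counting weighted codes -/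

/-- Weighted counting: an injective code on `E` with labels in `Lab` satisfies
`log |E| ≤ (average cost) + |P| log ∑ exp (-cost)`. -/
lemma log_card_le_of_code {X P L : Type*} [Fintype P] (E : Finset X) (hne : E.Nonempty)
    (code : X → P → L) (hinj : Set.InjOn code E) (Lab : Finset L)
    (hmem : ∀ x ∈ E, ∀ p, code x p ∈ Lab) (cost : L → ℝ) (a b : ℝ)
    (ha : ∑ x ∈ E, ∑ p, cost (code x p) ≤ a * E.card)
    (hb : ∑ l ∈ Lab, Real.exp (-cost l) ≤ Real.exp b) :
    Real.log E.card ≤ a + Fintype.card P * b := by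
  classical
  have hcard : (0 : ℝ) < E.card := by exact_mod_cast hne.card_pos
  have hup : ∑ x ∈ E, Real.exp (-∑ p, cost (code x p)) ≤ Real.exp (Fintype.card P * b) := by
    calc ∑ x ∈ E, Real.exp (-∑ p, cost (code x p))
        = ∑ w ∈ E.image code, ∏ p, Real.exp (-cost (w p)) := by
          rw [Finset.sum_image hinj]
          refine Finset.sum_congr rfl fun x _ => ?_
          rw [← Finset.sum_neg_distrib, Real.exp_sum]
      _ ≤ ∑ w ∈ Fintype.piFinset (fun _ : P => Lab), ∏ p, Real.exp (-cost (w p)) := by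
          refine Finset.sum_le_sum_of_subset_of_nonneg ?_ fun w _ _ => by positivity
          intro w hw
          obtain ⟨x, hx, rfl⟩ := Finset.mem_image.1 hw
          exact Fintype.mem_piFinset.2 (hmem x hx)
      _ = ∏ _p : P, ∑ l ∈ Lab, Real.exp (-cost l) := by
          rw [Finset.prod_univ_sum]
      _ ≤ ∏ _p : P, Real.exp b := by
          exact Finset.prod_le_prod (fun _ _ => by positivity) fun _ _ => hb
      _ = Real.exp (Fintype.card P * b) := by
          rw [Finset.prod_const, ← Real.exp_nat_mul, Finset.card_univ]
  -- Jensen's inequality, through the tangent line of `exp` at `-a`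
  have hlow : E.card * Real.exp (-a) ≤ ∑ x ∈ E, Real.exp (-∑ p, cost (code x p)) := by
    have h1 : ∀ x ∈ E, Real.exp (-a) * (a - ∑ p, cost (code x p) + 1)
        ≤ Real.exp (-∑ p, cost (code x p)) := by
      intro x _
      have := mul_le_mul_of_nonneg_left
        (Real.add_one_le_exp (a - ∑ p, cost (code x p))) (Real.exp_pos (-a)).le
      rwa [← Real.exp_add, show -a + (a - ∑ p, cost (code x p)) = -∑ p, cost (code x p) by ring]
        at this
    refine le_trans ?_ (Finset.sum_le_sum h1)
    rw [← Finset.mul_sum, Finset.sum_add_distrib, Finset.sum_sub_distrib]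
    simp only [Finset.sum_const, nsmul_eq_mul, mul_one]
    rw [mul_comm]
    exact mul_le_mul_of_nonneg_left (by linarith) (Real.exp_pos _).le
  rw [Real.log_le_iff_le_exp hcard, Real.exp_add]
  have := mul_le_mul_of_nonneg_left (hlow.trans hup) (Real.exp_pos a).le
  calc (E.card : ℝ) = Real.exp a * (E.card * Real.exp (-a)) := by
        rw [Real.exp_neg]; field_simp
    _ ≤ _ := this

/-! ### Labels of real values -/

open Classical in
/-- The least `n` with `M₀ < n ≤ M` such that `v` is a multiple of `2⁻ⁿ`, or `M` if there is
none. -/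
noncomputable def depth (M₀ M : ℕ) (v : ℝ) : ℕ :=
  if h : ∃ n, M₀ < n ∧ n ≤ M ∧ IsDyadic n v then Nat.find h else M

lemma depth_mem {M₀ M : ℕ} (hM : M₀ < M) (v : ℝ) : M₀ < depth M₀ M v ∧ depth M₀ M v ≤ M := by
  classical
  unfold depth
  split_ifs with h
  · exact ⟨(Nat.find_spec h).1, (Nat.find_spec h).2.1⟩
  · exact ⟨hM, le_rfl⟩

lemma depth_dyadic (M₀ M : ℕ) (v : ℝ) : IsDyadic (depth M₀ M v) v ∨ depth M₀ M v = M := by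
  classical
  unfold depth
  split_ifs with h
  · exact Or.inl (Nat.find_spec h).2.2
  · exact Or.inr rfl

lemma not_dyadic_of_lt_depth {M₀ M : ℕ} {v : ℝ} (hv : ¬ IsDyadic M₀ v) :
    ∀ j < depth M₀ M v, ¬ IsDyadic j v := by
  classical
  intro j hj hd
  rcases le_or_gt j M₀ with h | h
  · exact hv (hd.mono h)
  · unfold depth at hj
    split_ifs at hj with h'
    · have h2 := (Nat.find_spec h').2.1
      exact Nat.find_min h' hj ⟨h, by omega, hd⟩
    · exact h' ⟨j, h, hj.le, hd⟩

open Classical in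
/-- The label of the value `v`. A multiple of `2⁻ᴹ⁰` at a position where prediction is possible
(`int`) gets the free label `none`; otherwise the label is a level `n` and the integer part of
`2ⁿ v`, which determine `v` exactly or up to `2⁻ᴹ`. -/
noncomputable def label (M₀ M : ℕ) (int : Prop) (v : ℝ) : Option (ℕ × ℤ) :=
  if int then
    if IsDyadic M₀ v then none else some (depth M₀ M v, ⌊2 ^ depth M₀ M v * v⌋)
  else some (M, ⌊2 ^ M * v⌋)

/-- The number of binary digits charged for a label. -/
def labelCost : Option (ℕ × ℤ) → ℕ
  | none => 0
  | some p => p.1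

lemma label_none {M₀ M : ℕ} {int : Prop} {v : ℝ} (h : label M₀ M int v = none) :
    int ∧ IsDyadic M₀ v := by
  unfold label at h
  split_ifs at h with h1 h2
  exact ⟨h1, h2⟩

lemma label_some {M₀ M : ℕ} (hM : M₀ < M) {int : Prop} {v : ℝ} {n : ℕ} {z : ℤ}
    (h : label M₀ M int v = some (n, z)) :
    (M₀ < n ∧ n ≤ M) ∧ z = ⌊2 ^ n * v⌋ ∧ (IsDyadic n v ∨ n = M) := by
  unfold label at h
  split_ifs at h with h1 h2
  · simp only [Option.some.injEq, Prod.mk.injEq] at h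
    obtain ⟨rfl, rfl⟩ := h
    exact ⟨depth_mem hM v, rfl, depth_dyadic M₀ M v⟩
  · simp only [Option.some.injEq, Prod.mk.injEq] at h
    obtain ⟨rfl, rfl⟩ := h
    exact ⟨⟨hM, le_rfl⟩, rfl, Or.inr rfl⟩

/-- A common label other than `none` pins the value down to within `2⁻ᴹ`. -/
lemma label_close {M₀ M : ℕ} (hM : M₀ < M) {int : Prop} {v w : ℝ} {p : ℕ × ℤ}
    (hv : label M₀ M int v = some p) (hw : label M₀ M int w = some p) :
    |v - w| < (1 / 2) ^ M := by
  obtain ⟨n, z⟩ := p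
  obtain ⟨-, hz, hv'⟩ := label_some hM hv
  obtain ⟨-, hz', hw'⟩ := label_some hM hw
  have hpos : (0 : ℝ) < 2 ^ n := by positivity
  by_cases hn : n = M
  · subst hn
    have := Int.abs_sub_lt_one_of_floor_eq_floor (hz.symm.trans hz')
    rw [← mul_sub, abs_mul, abs_of_pos hpos] at this
    rw [one_div, inv_pow, ← one_div, lt_div_iff₀ hpos]
    linarith
  · obtain ⟨a, ha⟩ := hv'.resolve_right hn
    obtain ⟨b, hb⟩ := hw'.resolve_right hn
    rw [ha, Int.floor_intCast] at hz
    rw [hb, Int.floor_intCast] at hz'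
    have : v = w := by
      apply mul_left_cancel₀ hpos.ne'
      rw [ha, hb, ← hz, ← hz']
    rw [this, sub_self, abs_zero]
    positivity

lemma labelCost_le {M₀ M : ℕ} (hM : M₀ < M) (int : Prop) [Decidable int] (v : ℝ) :
    (labelCost (label M₀ M int v) : ℝ≥0∞)
      ≤ dyadicCost v / (M₀ + 1) + if int then 0 else (M : ℝ≥0∞) := by
  classical
  unfold label
  by_cases h1 : int
  · by_cases h2 : IsDyadic M₀ v
    · simp [h1, h2, labelCost]
    · simp only [h1, h2, if_true, if_false, labelCost, add_zero]
      rw [ENNReal.le_div_iff_mul_le (by simp) (by simp)]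
      refine le_trans ?_ (sq_le_dyadicCost (not_dyadic_of_lt_depth h2 (M := M)))
      rw [sq]
      refine mul_le_mul' le_rfl ?_
      exact_mod_cast (depth_mem hM v).1
  · simp [h1, labelCost]

/-- The labels of values in `[-Q, Q]`. -/
noncomputable def labelSet (M₀ M Q : ℕ) : Finset (Option (ℕ × ℤ)) :=
  Finset.insertNone ((Finset.Ioc M₀ M).biUnion fun n =>
    (Finset.Icc (-(Q * 2 ^ n : ℤ)) (Q * 2 ^ n)).image fun z => (n, z))

lemma label_mem {M₀ M : ℕ} (hM : M₀ < M) (int : Prop) {v : ℝ} {Q : ℕ} (hv : |v| ≤ Q) :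
    label M₀ M int v ∈ labelSet M₀ M Q := by
  rcases h : label M₀ M int v with _ | ⟨n, z⟩
  · simp [labelSet]
  · obtain ⟨hn, rfl, -⟩ := label_some hM h
    simp only [labelSet, Finset.some_mem_insertNone, Finset.mem_biUnion, Finset.mem_Ioc,
      Finset.mem_image, Finset.mem_Icc]
    refine ⟨n, hn, _, ⟨?_, ?_⟩, rfl⟩
    · rw [Int.le_floor]
      push_cast
      nlinarith [(abs_le.1 hv).1, show (0 : ℝ) < 2 ^ n by positivity]
    · rw [← Int.cast_le (R := ℝ)]
      refine (Int.floor_le _).trans ?_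
      push_cast
      nlinarith [(abs_le.1 hv).2, show (0 : ℝ) < 2 ^ n by positivity]

lemma labelSet_sum (M₀ M Q : ℕ) :
    ∑ l ∈ labelSet M₀ M Q, Real.exp (-(Real.log 4 * labelCost l))
      ≤ Real.exp ((2 * Q + 1) * (1 / 2) ^ M₀) := by
  have hw (n : ℕ) : Real.exp (-(Real.log 4 * n)) = (1 / 4) ^ n := by
    rw [← mul_neg, Real.exp_mul, Real.exp_log (by norm_num), Real.rpow_neg (by norm_num),
      Real.rpow_natCast]
    simp
  have hgeom : ∑ n ∈ Finset.Ioc M₀ M, (1 / 2 : ℝ) ^ n ≤ (1 / 2) ^ M₀ := by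
    rcases le_total M M₀ with h | h
    · rw [Finset.Ioc_eq_empty_of_le h]; simp
    · have : ∑ n ∈ Finset.Ioc M₀ M, (1 / 2 : ℝ) ^ n = (1 / 2) ^ M₀ - (1 / 2) ^ M := by
        induction M, h using Nat.le_induction with
        | base => simp
        | succ M h ih => rw [Finset.sum_Ioc_succ_top h, ih]; ring
      rw [this]
      have : (0 : ℝ) < (1 / 2) ^ M := by positivity
      linarith
  rw [labelSet, Finset.sum_insertNone, Finset.sum_biUnion]
  · have hn (n : ℕ) : ∑ p ∈ (Finset.Icc (-(Q * 2 ^ n : ℤ)) (Q * 2 ^ n)).image (fun z => (n, z)),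
        Real.exp (-(Real.log 4 * labelCost (some p))) ≤ (2 * Q + 1) * (1 / 2) ^ n := by
      rw [Finset.sum_image (fun a _ b _ h => (Prod.mk.inj h).2)]
      simp only [labelCost, hw, Finset.sum_const, Int.card_Icc, nsmul_eq_mul]
      have h1 : ((((Q * 2 ^ n : ℤ) + 1 - -(Q * 2 ^ n)).toNat : ℕ) : ℝ) = 2 * Q * 2 ^ n + 1 := by
        have : ((Q * 2 ^ n : ℤ) + 1 - -(Q * 2 ^ n)).toNat = 2 * Q * 2 ^ n + 1 := by
          have : ((Q * 2 ^ n : ℤ) + 1 - -(Q * 2 ^ n)) = ((2 * Q * 2 ^ n + 1 : ℕ) : ℤ) := by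
            push_cast; ring
          rw [this, Int.toNat_natCast]
        rw [this]; push_cast; ring
      rw [h1]
      have h2 : (1 : ℝ) ≤ 2 ^ n := one_le_pow₀ (by norm_num)
      have h3 : (1 / 4 : ℝ) ^ n * 2 ^ n = (1 / 2) ^ n := by rw [← mul_pow]; norm_num
      calc (2 * Q * 2 ^ n + 1 : ℝ) * (1 / 4) ^ n
          ≤ ((2 * Q + 1) * 2 ^ n) * (1 / 4) ^ n := by gcongr; linarith
        _ = _ := by rw [← h3]; ring
    have h0 : Real.exp (-(Real.log 4 * (labelCost none : ℕ))) = 1 := by simp [labelCost]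
    rw [h0]
    refine le_trans ?_ (Real.add_one_le_exp _)
    rw [add_comm]
    gcongr
    refine (Finset.sum_le_sum fun n _ => hn n).trans ?_
    rw [← Finset.mul_sum]
    gcongr
  · intro a _ b _ hab
    rw [Function.onFun, Finset.disjoint_left]
    intro p hp hq
    obtain ⟨_, _, rfl⟩ := Finset.mem_image.1 hp
    obtain ⟨_, _, h⟩ := Finset.mem_image.1 hq
    exact hab (Prod.mk.inj h).1.symm

/-! ### Counting separated points -/

/-- The counting argument. Reading a finite set `F` from the top of the partial order
`g < h ↔ h g⁻¹ ∈ S`, a value with label `none` is a multiple of `2⁻ᴹ⁰` known with error less than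
`2⁻ᴹ⁰` from the earlier values, hence known exactly; so the labels separate the points of `E`. -/
lemma log_card_separated_le {Γ X ι : Type*} [Group Γ] [MulAction Γ X] [Fintype ι]
    (S : Subsemigroup Γ) (hS : (1 : Γ) ∉ S) (f : ι → X → ℝ) (Q : ℕ) (hQ : ∀ k x, |f k x| ≤ Q)
    {M₀ M : ℕ} (hM : M₀ < M) (K : Finset Γ) (hK : ∀ s ∈ K, s ∈ S)
    (hpred : ∀ k x y, (∀ s ∈ K, |f k (s • x) - f k (s • y)| < (1 / 2) ^ M) →
      |f k x - f k y| < (1 / 2) ^ M₀)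
    (F : Finset Γ) (B : Finset Γ) (hB : ∀ g ∈ F, g ∉ B → ∀ s ∈ K, s * g ∈ F)
    (E : Finset X) (hne : E.Nonempty)
    (hE : ∀ x ∈ E, ∀ y ∈ E, x ≠ y → ∃ g ∈ F, ∃ k, 1 ≤ |f k (g • x) - f k (g • y)|)
    (D : ℝ) (hD0 : 0 ≤ D)
    (hD : ∑ x ∈ E, ∑ g ∈ F, ∑ k, dyadicCost (f k (g • x)) ≤ ENNReal.ofReal (D * E.card)) :
    Real.log E.card ≤ Real.log 4 * (D / (M₀ + 1) + Fintype.card ι * M * B.card)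
      + (F.card * Fintype.card ι) * ((2 * Q + 1) * (1 / 2) ^ M₀) := by
  classical
  let code : X → (F × ι) → Option (ℕ × ℤ) :=
    fun x p => label M₀ M (p.1.1 ∉ B) (f p.2 (p.1.1 • x))
  have hinj : Set.InjOn code E := by
    intro x hx y hy hxy
    by_contra hne
    obtain ⟨g₀, hg₀, k, hk⟩ := hE x hx y hy hne
    have hall : ∀ g : F, |f k (g.1 • x) - f k (g.1 • y)| < (1 / 2) ^ M := by
      let r : F → F → Prop := fun g h => g.1 * h.1⁻¹ ∈ S
      have : IsTrans F r := ⟨fun a b c hab hbc => by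
        have := S.mul_mem hab hbc
        simpa [r, mul_assoc] using this⟩
      have : Std.Irrefl r := ⟨fun a ha => hS (by simpa [r] using ha)⟩
      have wf : WellFounded r := Finite.wellFounded_of_trans_of_irrefl r
      intro g
      induction g using wf.induction with
      | _ g ih =>
        have heq : label M₀ M (g.1 ∉ B) (f k (g.1 • x)) = label M₀ M (g.1 ∉ B) (f k (g.1 • y)) :=
          congrFun hxy (g, k)
        rcases hl : label M₀ M (g.1 ∉ B) (f k (g.1 • x)) with _ | p
        · obtain ⟨hgB, a, ha⟩ := label_none hl
          obtain ⟨-, b, hb⟩ := label_none (heq.symm.trans hl)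
          have hlt := hpred k (g.1 • x) (g.1 • y) fun s hs => by
            have := ih ⟨s * g.1, hB g.1 g.2 hgB s hs⟩ (by simpa [r] using hK s hs)
            simpa [mul_smul] using this
          have hpos : (0 : ℝ) < 2 ^ M₀ := by positivity
          rw [one_div, inv_pow, ← one_div, lt_div_iff₀ hpos, mul_comm, ← abs_of_pos hpos,
            ← abs_mul, mul_sub, ha, hb] at hlt
          have hab : a = b := by
            have : |a - b| < 1 := by exact_mod_cast hlt
            rw [Int.abs_lt_one_iff] at this
            omega
          have : f k (g.1 • x) = f k (g.1 • y) := by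
            apply mul_left_cancel₀ hpos.ne'
            rw [ha, hb, hab]
          rw [this, sub_self, abs_zero]
          positivity
        · exact label_close hM hl (heq.symm.trans hl)
    have h1 := hall ⟨g₀, hg₀⟩
    have h2 : ((1 : ℝ) / 2) ^ M ≤ 1 := pow_le_one₀ (by norm_num) (by norm_num)
    exact absurd (hk.trans_lt h1) (not_lt.2 h2)
  have hcost : ∑ x ∈ E, ∑ p, (labelCost (code x p) : ℝ)
      ≤ (D / (M₀ + 1) + Fintype.card ι * M * B.card) * E.card := by
    have h1 : ((∑ x ∈ E, ∑ p, labelCost (code x p) : ℕ) : ℝ≥0∞)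
        ≤ ENNReal.ofReal ((D / (M₀ + 1) + Fintype.card ι * M * B.card) * E.card) := by
      push_cast
      calc ∑ x ∈ E, ∑ p, (labelCost (code x p) : ℝ≥0∞)
          ≤ ∑ x ∈ E, ∑ p : F × ι, (dyadicCost (f p.2 (p.1.1 • x)) / (M₀ + 1)
            + if p.1.1 ∉ B then 0 else (M : ℝ≥0∞)) :=
            Finset.sum_le_sum fun x _ => Finset.sum_le_sum fun p _ => labelCost_le hM _ _
        _ = (∑ x ∈ E, ∑ g ∈ F, ∑ k, dyadicCost (f k (g • x))) / (M₀ + 1)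
            + ∑ x ∈ E, ∑ g ∈ F, ∑ k : ι, if g ∉ B then 0 else (M : ℝ≥0∞) := by
            simp only [Finset.sum_add_distrib, Fintype.sum_prod_type, div_eq_mul_inv,
              Finset.sum_mul, Finset.univ_eq_attach]
            congr 1
            · refine Finset.sum_congr rfl fun x _ => ?_
              exact Finset.sum_attach F fun g => ∑ k, dyadicCost (f k (g • x)) * (M₀ + 1 : ℝ≥0∞)⁻¹
            · refine Finset.sum_congr rfl fun x _ => ?_
              exact Finset.sum_attach F fun g => ∑ k : ι, if g ∉ B then 0 else (M : ℝ≥0∞)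
        _ ≤ ENNReal.ofReal (D * E.card) / (M₀ + 1) + E.card * (B.card * (Fintype.card ι * M)) := by
            gcongr
            rw [← nsmul_eq_mul]
            refine Finset.sum_le_card_nsmul _ _ _ fun x _ => ?_
            have : ∀ g ∈ F, (∑ k : ι, if g ∉ B then 0 else (M : ℝ≥0∞))
                = if g ∈ B then (Fintype.card ι * M : ℝ≥0∞) else 0 := by
              intro g _
              by_cases h : g ∈ B <;> simp [h]
            rw [Finset.sum_congr rfl this, ← Finset.sum_filter, Finset.sum_const, nsmul_eq_mul]
            gcongr
            intro g hg
            exact (Finset.mem_filter.1 hg).2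
        _ = _ := by
            rw [add_mul, ENNReal.ofReal_add (by positivity) (by positivity)]
            congr 1
            · rw [div_mul_eq_mul_div, ENNReal.ofReal_div_of_pos (by positivity)]
              congr 1
              rw [ENNReal.ofReal_add (by positivity) zero_le_one]
              simp
            · rw [show (Fintype.card ι * M * B.card * E.card : ℝ)
                = ((E.card * (B.card * (Fintype.card ι * M)) : ℕ) : ℝ) by push_cast; ring,
                ENNReal.ofReal_natCast]
              push_cast; rfl
    rw [← ENNReal.ofReal_natCast, ENNReal.ofReal_le_ofReal_iff (by positivity)] at h1
    exact_mod_cast h1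
  have := log_card_le_of_code E hne code hinj (labelSet M₀ M Q)
    (fun x _ p => label_mem hM _ (hQ _ _)) (fun l => Real.log 4 * labelCost l)
    (Real.log 4 * (D / (M₀ + 1) + Fintype.card ι * M * B.card)) _ (by
      simp only [← Finset.mul_sum]
      rw [mul_assoc]
      exact mul_le_mul_of_nonneg_left hcost (Real.log_nonneg (by norm_num)))
    (labelSet_sum M₀ M Q)
  simpa using this

/-! ### Prediction with finite precision, and separated sets -/

/-- Elements of the closed algebra generated by the translates `f ∘ s` are, up to `ε`, determined
by finitely many of these translates known with sufficient precision. -/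
lemma exists_modulus {Γ X : Type*} [Group Γ] [MetricSpace X] [CompactSpace X] [MulAction Γ X]
    (hc : ∀ g : Γ, Continuous fun x : X => g • x) (S : Subsemigroup Γ) (f : ContinuousMap X ℝ)
    (hf : f ∈ closure (Algebra.adjoin ℝ
        {h : ContinuousMap X ℝ | ∃ s ∈ S, h = f.comp ⟨fun x => s • x, hc s⟩} :
          Set (ContinuousMap X ℝ))) (ε : ℝ) (hε : 0 < ε) :
    ∃ K : Finset Γ, (∀ s ∈ K, s ∈ S) ∧ ∃ δ > 0, ∀ x y : X,
      (∀ s ∈ K, |f (s • x) - f (s • y)| < δ) → |f x - f y| < ε := by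
  classical
  have key : ∀ p ∈ Algebra.adjoin ℝ
      {h : ContinuousMap X ℝ | ∃ s ∈ S, h = f.comp ⟨fun x => s • x, hc s⟩},
      ∀ ε > 0, ∃ K : Finset Γ, (∀ s ∈ K, s ∈ S) ∧ ∃ δ > 0, ∀ x y : X,
      (∀ s ∈ K, |f (s • x) - f (s • y)| < δ) → |p x - p y| < ε := by
    intro p hp
    induction hp using Algebra.adjoin_induction with
    | mem p hp =>
      obtain ⟨s, hs, rfl⟩ := hp
      intro ε hε
      exact ⟨{s}, by simpa using hs, ε, hε, fun x y h => h s (Finset.mem_singleton_self s)⟩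
    | algebraMap r =>
      intro ε hε
      exact ⟨∅, by simp, 1, one_pos, fun x y _ => by simpa using hε⟩
    | add p q _ _ ihp ihq =>
      intro ε hε
      obtain ⟨K₁, h₁, δ₁, hδ₁, H₁⟩ := ihp (ε / 2) (by linarith)
      obtain ⟨K₂, h₂, δ₂, hδ₂, H₂⟩ := ihq (ε / 2) (by linarith)
      refine ⟨K₁ ∪ K₂, ?_, min δ₁ δ₂, lt_min hδ₁ hδ₂, fun x y h => ?_⟩
      · intro s hs
        rcases Finset.mem_union.1 hs with hs | hs
        exacts [h₁ s hs, h₂ s hs]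
      · have a := H₁ x y fun s hs => (h s (Finset.mem_union_left _ hs)).trans_le (min_le_left _ _)
        have b := H₂ x y fun s hs => (h s (Finset.mem_union_right _ hs)).trans_le (min_le_right _ _)
        rw [abs_lt] at *
        simp only [ContinuousMap.add_apply]
        constructor <;> linarith
    | mul p q _ _ ihp ihq =>
      intro ε hε
      have hp0 := norm_nonneg p
      have hq0 := norm_nonneg q
      obtain ⟨K₁, h₁, δ₁, hδ₁, H₁⟩ := ihp (ε / (2 * (‖q‖ + 1))) (by positivity)
      obtain ⟨K₂, h₂, δ₂, hδ₂, H₂⟩ := ihq (ε / (2 * (‖p‖ + 1))) (by positivity)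
      refine ⟨K₁ ∪ K₂, ?_, min δ₁ δ₂, lt_min hδ₁ hδ₂, fun x y h => ?_⟩
      · intro s hs
        rcases Finset.mem_union.1 hs with hs | hs
        exacts [h₁ s hs, h₂ s hs]
      · have a := H₁ x y fun s hs => (h s (Finset.mem_union_left _ hs)).trans_le (min_le_left _ _)
        have b := H₂ x y fun s hs => (h s (Finset.mem_union_right _ hs)).trans_le (min_le_right _ _)
        rw [lt_div_iff₀ (by positivity)] at a b
        have hqx : |q x| ≤ ‖q‖ := q.norm_coe_le_norm x
        have hpy : |p y| ≤ ‖p‖ := p.norm_coe_le_norm y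
        have e : (p * q) x - (p * q) y = (p x - p y) * q x + p y * (q x - q y) := by
          simp only [ContinuousMap.mul_apply]; ring
        rw [e]
        refine (abs_add_le _ _).trans_lt ?_
        rw [abs_mul, abs_mul]
        have u := mul_le_mul_of_nonneg_left hqx (abs_nonneg (p x - p y))
        have v := mul_le_mul_of_nonneg_right hpy (abs_nonneg (q x - q y))
        nlinarith [abs_nonneg (p x - p y), abs_nonneg (q x - q y)]
  obtain ⟨p, hp, hfp⟩ := Metric.mem_closure_iff.1 hf (ε / 3) (by linarith)
  obtain ⟨K, hK, δ, hδ, H⟩ := key p hp (ε / 3) (by linarith)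
  refine ⟨K, hK, δ, hδ, fun x y h => ?_⟩
  have h1 := H x y h
  have h2 := (ContinuousMap.dist_apply_le_dist (f := f) (g := p) x).trans_lt hfp
  have h3 := (ContinuousMap.dist_apply_le_dist (f := f) (g := p) y).trans_lt hfp
  rw [Real.dist_eq] at h2 h3
  rw [abs_lt] at *
  constructor <;> linarith

lemma exists_modulus_finite {Γ X ι : Type*} [Group Γ] [MetricSpace X] [CompactSpace X]
    [MulAction Γ X] [Fintype ι]
    (hc : ∀ g : Γ, Continuous fun x : X => g • x) (S : Subsemigroup Γ)
    (hpred : ∀ f : ContinuousMap X ℝ,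
      f ∈ closure (Algebra.adjoin ℝ
        {h : ContinuousMap X ℝ | ∃ s ∈ S, h = f.comp ⟨fun x => s • x, hc s⟩} :
          Set (ContinuousMap X ℝ)))
    (f : ι → X → ℝ) (hf : ∀ k, Continuous (f k)) (M₀ : ℕ) :
    ∃ K : Finset Γ, (∀ s ∈ K, s ∈ S) ∧ ∃ M, M₀ < M ∧ ∀ k x y,
      (∀ s ∈ K, |f k (s • x) - f k (s • y)| < (1 / 2) ^ M) → |f k x - f k y| < (1 / 2) ^ M₀ := by
  classical
  have h (k : ι) := exists_modulus hc S ⟨f k, hf k⟩ (hpred _) ((1 / 2) ^ M₀) (by positivity)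
  choose K hK δ hδ H using h
  have hM (k : ι) : ∃ m : ℕ, (1 / 2 : ℝ) ^ m < δ k := exists_pow_lt_of_lt_one (hδ k) (by norm_num)
  choose m hm using hM
  refine ⟨Finset.univ.biUnion K, ?_, M₀ + 1 + ∑ k, m k, by omega, fun k x y hxy => ?_⟩
  · intro s hs
    obtain ⟨k, -, hk⟩ := Finset.mem_biUnion.1 hs
    exact hK k s hk
  · refine H k x y fun s hs => ?_
    refine (hxy s (Finset.mem_biUnion.2 ⟨k, Finset.mem_univ k, hs⟩)).trans (lt_of_le_of_lt ?_ (hm k))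
    refine pow_le_pow_of_le_one (by norm_num) (by norm_num) ?_
    have := Finset.single_le_sum (fun j _ => Nat.zero_le (m j)) (Finset.mem_univ k)
    omega

/-- Greedy construction of separated sets: fewer than `coverNum` points cannot be
`F`-spanning. -/
lemma exists_separated {Γ X : Type*} [Group Γ] [MetricSpace X] [MulAction Γ X]
    (U : Set (Set X)) (r : ℝ) (hr0 : 0 < r) (hr : ∀ x : X, ∃ u ∈ U, Metric.ball x r ⊆ u) (F : Finset Γ)
    (n : ℕ) (hn : n ≤ coverNum (coverJoin F U)) :
    ∃ E : Finset X, E.card = n ∧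
      ∀ x ∈ E, ∀ y ∈ E, x ≠ y → ∃ g ∈ F, r ≤ dist (g • x) (g • y) := by
  classical
  induction n with
  | zero => exact ⟨∅, by simp⟩
  | succ n ih =>
    obtain ⟨E, hE, hsep⟩ := ih (by omega)
    choose u hu hball using hr
    have : ∃ z : X, ∀ y ∈ E, ∃ g ∈ F, r ≤ dist (g • z) (g • y) := by
      by_contra! hcon
      let V : Finset (Set X) := E.image fun y => ⋂ g ∈ F, (fun x => g • x) ⁻¹' u (g • y)
      have hle : coverNum (coverJoin F U) ≤ V.card := by
        refine Nat.sInf_le ⟨V, ?_, ?_, rfl⟩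
        · intro v hv
          obtain ⟨y, -, rfl⟩ := Finset.mem_image.1 (Finset.mem_coe.1 hv)
          exact ⟨fun g => u (g • y), fun g _ => hu _, rfl⟩
        · refine Set.eq_univ_of_forall fun z => ?_
          obtain ⟨y, hy, hzy⟩ := hcon z
          refine ⟨_, Finset.mem_coe.2 (Finset.mem_image_of_mem _ hy), ?_⟩
          simp only [Set.mem_iInter]
          exact fun g hg => hball (g • y) (Metric.mem_ball.2 (hzy g hg))
      have : V.card ≤ E.card := Finset.card_image_le
      omega
    obtain ⟨z, hz⟩ := this
    have hzE : z ∉ E := by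
      intro hzE
      obtain ⟨g, -, hg⟩ := hz z hzE
      rw [dist_self] at hg
      exact absurd hr0 (not_lt.2 hg)
    refine ⟨insert z E, by rw [Finset.card_insert_of_notMem hzE, hE], ?_⟩
    intro x hx y hy hxy
    rcases Finset.mem_insert.1 hx with rfl | hx₁ <;> rcases Finset.mem_insert.1 hy with rfl | hy₁
    · exact absurd rfl hxy
    · exact hz y hy₁
    · obtain ⟨g, hg, h⟩ := hz x hx₁
      exact ⟨g, hg, by rwa [dist_comm]⟩
    · exact hsep x hx₁ y hy₁ hxy

/-! ### Følner boundary and choice of the shift -/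

/-- The points of `F` that some element of `K` moves out of `F` are negligible along a Følner
sequence. -/
lemma exists_boundary {Γ : Type*} [Group Γ] (F : ℕ → Finset Γ) (hF : IsFolner F) (K : Finset Γ)
    (η : ℝ) (hη : 0 < η) : ∀ᶠ i in atTop, ∃ B : Finset Γ,
      (∀ g ∈ F i, g ∉ B → ∀ s ∈ K, s * g ∈ F i) ∧ (B.card : ℝ) < η * (F i).card := by
  classical
  have h := tendsto_finsetSum K fun s _ => hF.2 s
  rw [Finset.sum_const_zero] at h
  filter_upwards [h.eventually (gt_mem_nhds hη)] with i hi
  refine ⟨K.biUnion fun s => (F i).filter fun g => s * g ∉ F i, ?_, ?_⟩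
  · intro g hg hgB s hs
    by_contra hsg
    exact hgB (Finset.mem_biUnion.2 ⟨s, hs, Finset.mem_filter.2 ⟨hg, hsg⟩⟩)
  · have hpos : (0 : ℝ) < (F i).card := by exact_mod_cast (hF.1 i).card_pos
    rw [← Finset.sum_div, div_lt_iff₀ hpos] at hi
    refine lt_of_le_of_lt ?_ hi
    have : (K.biUnion fun s => (F i).filter fun g => s * g ∉ F i).card
        ≤ ∑ s ∈ K, ((fun h => s * h) '' ↑(F i) \ (↑(F i) : Set Γ)).ncard := by
      refine Finset.card_biUnion_le.trans (Finset.sum_le_sum fun s _ => ?_)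
      rw [← Set.ncard_coe_finset, ← Set.ncard_image_of_injective _ (mul_right_injective s)]
      refine Set.ncard_le_ncard ?_ (((F i).finite_toSet.image _).sdiff)
      rintro _ ⟨g, hg, rfl⟩
      have := Finset.mem_filter.1 (Finset.mem_coe.1 hg)
      exact ⟨⟨g, this.1, rfl⟩, this.2⟩
    exact_mod_cast this

/-- Choice of the shift: by Fatou's lemma a single `t` keeps the average cost bounded along
infinitely many of the given finite configurations. -/
lemma exists_shift {Γ X ι : Type*} [Group Γ] [MetricSpace X] [MulAction Γ X] [Fintype ι]
    (c : ℝ → ℝ) (hc : Continuous c) (C : ℝ≥0∞) (hC : C ≠ ⊤)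
    (hcost : ∀ a, ∫⁻ t in Set.Ioc 0 1, dyadicCost (c (a + t)) ≤ C)
    (φ : ι → X → ℝ) (F : ℕ → Finset Γ) (E : ℕ → Finset X) (p : ℕ → Prop)
    (hp : ∃ᶠ i in atTop, p i) :
    ∃ (t D : ℝ), 0 ≤ D ∧ ∃ᶠ i in atTop, p i ∧
      ∑ x ∈ E i, ∑ g ∈ F i, ∑ k, dyadicCost (c (φ k (g • x) + t))
        ≤ ENNReal.ofReal (D * (F i).card * (E i).card) := by
  obtain ⟨ψ, hψ, hpψ⟩ := extraction_of_frequently_atTop hp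
  have hm (a : ℝ) : Measurable fun t => dyadicCost (c (a + t)) :=
    dyadicCost_measurable.comp (hc.measurable.comp (measurable_const_add a))
  let A : ℕ → ℝ → ℝ≥0∞ := fun i t =>
    (∑ x ∈ E i, ∑ g ∈ F i, ∑ k, dyadicCost (c (φ k (g • x) + t))) / ((F i).card * (E i).card)
  have hmS (i : ℕ) : Measurable fun t =>
      ∑ x ∈ E i, ∑ g ∈ F i, ∑ k, dyadicCost (c (φ k (g • x) + t)) :=
    Finset.measurable_fun_sum _ fun x _ => Finset.measurable_fun_sum _ fun g _ =>
      Finset.measurable_fun_sum _ fun k _ => hm _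
  have hmA (i : ℕ) : Measurable (A i) := (hmS i).div_const _
  have hbase (i : ℕ) : ∫⁻ t in Set.Ioc 0 1, A i t ≤ Fintype.card ι * C := by
    simp only [A, div_eq_mul_inv]
    rw [lintegral_mul_const _ (hmS i), ← div_eq_mul_inv]
    refine ENNReal.div_le_of_le_mul ?_
    rw [lintegral_finsetSum _ fun x _ => Finset.measurable_fun_sum _ fun g _ =>
      Finset.measurable_fun_sum _ fun k _ => hm _]
    have : ∀ x ∈ E i, ∫⁻ t in Set.Ioc 0 1, ∑ g ∈ F i, ∑ k, dyadicCost (c (φ k (g • x) + t))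
        ≤ (F i).card • (Fintype.card ι • C) := by
      intro x _
      rw [lintegral_finsetSum _ fun g _ => Finset.measurable_fun_sum _ fun k _ => hm _]
      refine Finset.sum_le_card_nsmul _ _ _ fun g _ => ?_
      rw [lintegral_finsetSum _ fun k _ => hm _]
      exact Finset.sum_le_card_nsmul _ _ _ fun k _ => hcost _
    refine (Finset.sum_le_card_nsmul _ _ _ this).trans (le_of_eq ?_)
    simp only [nsmul_eq_mul]
    ring
  have hfatou : ∫⁻ t in Set.Ioc 0 1, liminf (fun n => A (ψ n) t) atTop ≤ Fintype.card ι * C := by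
    refine (lintegral_liminf_le fun n => hmA (ψ n)).trans ?_
    refine (liminf_le_liminf (Eventually.of_forall fun n => hbase (ψ n))).trans ?_
    simp
  have : IsProbabilityMeasure (volume.restrict (Set.Ioc (0 : ℝ) 1)) := ⟨by simp⟩
  obtain ⟨t, ht⟩ := exists_le_lintegral (μ := volume.restrict (Set.Ioc (0 : ℝ) 1))
    (f := fun t => liminf (fun n => A (ψ n) t) atTop)
    (Measurable.liminf fun n => hmA (ψ n)).aemeasurable
  have hfin : Fintype.card ι * C ≠ ⊤ := ENNReal.mul_ne_top (by simp) hC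
  have hlt : liminf (fun n => A (ψ n) t) atTop < Fintype.card ι * C + 1 :=
    (ht.trans hfatou).trans_lt (ENNReal.lt_add_right hfin one_ne_zero)
  have hfreq := frequently_lt_of_liminf_lt (by isBoundedDefault) hlt
  refine ⟨t, (Fintype.card ι * C + 1).toReal, ENNReal.toReal_nonneg, ?_⟩
  refine hψ.tendsto_atTop.frequently (p := fun i => p i ∧ _) ?_
  refine hfreq.mono fun n hn => ⟨hpψ n, ?_⟩
  rw [mul_assoc, ENNReal.ofReal_mul ENNReal.toReal_nonneg,
    ENNReal.ofReal_toReal (ENNReal.add_ne_top.2 ⟨hfin, ENNReal.one_ne_top⟩),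
    ENNReal.ofReal_mul (by positivity), ENNReal.ofReal_natCast, ENNReal.ofReal_natCast]
  rcases eq_or_ne (((F (ψ n)).card * (E (ψ n)).card : ℝ≥0∞)) 0 with h0 | h0
  · have : F (ψ n) = ∅ ∨ E (ψ n) = ∅ := by simpa using h0
    rcases this with h | h <;> simp [h]
  · exact (ENNReal.div_le_iff h0 (ENNReal.mul_ne_top (by simp) (by simp))).1 hn.le

/-! ### Vanishing of the entropy -/

/-- **Hochman's conjecture / predictability implies zero entropy.**
Let `Γ` be a countable amenable group acting by homeomorphisms on a compact metric space `X`,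
and let `S ⊆ Γ` be a subsemigroup with `1 ∉ S`.  If every `f ∈ C(X)` lies in the closed
subalgebra of `C(X)` generated by `{f ∘ s : s ∈ S}` together with the constants, then the
topological entropy of the action is zero (computed along any Følner sequence). -/
theorem predictable_implies_zero_entropy
    {Γ X : Type*} [Group Γ] [Countable Γ] [MetricSpace X] [CompactSpace X] [MulAction Γ X]
    (hc : ∀ g : Γ, Continuous fun x : X => g • x)
    (hamen : ∃ F : ℕ → Finset Γ, IsFolner F)
    (S : Subsemigroup Γ) (hS : (1 : Γ) ∉ S)
    (hpred : ∀ f : ContinuousMap X ℝ,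
      f ∈ closure (Algebra.adjoin ℝ
        {h : ContinuousMap X ℝ | ∃ s ∈ S, h = f.comp ⟨fun x => s • x, hc s⟩} :
          Set (ContinuousMap X ℝ))) :
    ∀ F : ℕ → Finset Γ, IsFolner F → topEnt Γ X F = 0 := by
  intro F hF
  simp only [topEnt, ENNReal.iSup_eq_zero]
  intro U hU
  by_contra hpos
  obtain ⟨ε, hε0, hε⟩ := ENNReal.lt_iff_exists_nnreal_btwn.1 (pos_iff_ne_zero.2 hpos)
  have hfreq := frequently_lt_of_lt_limsup (by isBoundedDefault) hε
  obtain ⟨r, hr, hball⟩ := lebesgue_number_lemma_of_metric_sUnion (isCompact_univ (X := X))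
    hU.1 hU.2.ge
  choose E hEcard hEsep using fun i =>
    exists_separated U r hr (fun x => hball x (Set.mem_univ x)) (F i) _ le_rfl
  have hfreq' : ∃ᶠ i in atTop, (ε : ℝ) * (F i).card < Real.log (E i).card := by
    refine hfreq.mono fun i hi => ?_
    rw [hEcard, ← lt_div_iff₀ (by exact_mod_cast (hF.1 i).card_pos)]
    rw [← ENNReal.ofReal_coe_nnreal] at hi
    exact (ENNReal.ofReal_lt_ofReal_iff_of_nonneg ε.2).1 hi
  obtain ⟨c, hcc, hc1, C, hC, hcost⟩ := exists_staircase_cost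
  obtain ⟨T, -, hTfin, hT⟩ := (isCompact_univ (X := X)).finite_cover_balls
    (show 0 < r / 4 by linarith)
  have : Fintype T := hTfin.fintype
  -- functions moving by at least `3` between points at distance at least `r`
  let φ : T → X → ℝ := fun k x => 6 / r * dist x k
  obtain ⟨t, D, hD, hgood⟩ := exists_shift c hcc C hC hcost φ F E _ hfreq'
  let f : T → X → ℝ := fun k x => c (φ k x + t)
  have hf : ∀ k, Continuous (f k) := by
    intro k
    simp only [f, φ]
    fun_prop
  obtain ⟨Q, hQ⟩ : ∃ Q : ℕ, ∀ k x, |f k x| ≤ Q := by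
    obtain ⟨Q, hQ⟩ := exists_nat_ge (6 / r * Metric.diam (Set.univ : Set X) + |t| + 1)
    refine ⟨Q, fun k x => le_trans ?_ hQ⟩
    have h1 := hc1 (φ k x + t)
    have h2 : |φ k x| ≤ 6 / r * Metric.diam (Set.univ : Set X) := by
      rw [abs_of_nonneg (by positivity)]
      have := Metric.dist_le_diam_of_mem (isCompact_univ (X := X)).isBounded
        (Set.mem_univ x) (Set.mem_univ (k : X))
      exact mul_le_mul_of_nonneg_left this (by positivity)
    have h3 := abs_add_le (φ k x) t
    have h4 := abs_sub_abs_le_abs_sub (f k x) (φ k x + t)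
    change |f k x - (φ k x + t)| ≤ 1 at h1
    linarith
  have hsep : ∀ x y : X, r ≤ dist x y → ∃ k, 1 ≤ |f k x - f k y| := by
    intro x y hxy
    obtain ⟨k, hk, hxk⟩ := Set.mem_iUnion₂.1 (hT (Set.mem_univ x))
    refine ⟨⟨k, hk⟩, ?_⟩
    rw [Metric.mem_ball] at hxk
    have h1 := dist_triangle_right x y k
    have h2 : 3 ≤ 6 / r * (dist y k - dist x k) := by
      rw [div_mul_eq_mul_div, le_div_iff₀ hr]
      linarith
    have h3 := abs_le.1 (hc1 (φ ⟨k, hk⟩ x + t))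
    have h4 := abs_le.1 (hc1 (φ ⟨k, hk⟩ y + t))
    refine le_trans ?_ (neg_le_abs _)
    simp only [f, φ] at *
    linarith
  have hlog4 : 0 ≤ Real.log 4 := Real.log_nonneg (by norm_num)
  obtain ⟨M₀, hM₀⟩ : ∃ M₀ : ℕ, Real.log 4 * (D / (M₀ + 1))
      + Fintype.card T * ((2 * Q + 1) * (1 / 2) ^ M₀) < ε / 2 := by
    have h1 : Tendsto (fun n : ℕ => D / ((n : ℝ) + 1)) atTop (nhds 0) :=
      tendsto_const_div_atTop_nhds_zero_nat D |>.comp (tendsto_add_atTop_nat 1) |>.congr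
        fun n => by simp
    have h2 : Tendsto (fun n : ℕ => ((1 : ℝ) / 2) ^ n) atTop (nhds 0) :=
      tendsto_pow_atTop_nhds_zero_of_lt_one (by norm_num) (by norm_num)
    have h3 := (h1.const_mul (Real.log 4)).add
      ((h2.const_mul (2 * Q + 1 : ℝ)).const_mul (Fintype.card T : ℝ))
    simp only [mul_zero, add_zero] at h3
    have hε' : (0 : ℝ) < ε / 2 := by
      have : (0 : ℝ) < ε := by exact_mod_cast hε0
      linarith
    exact (h3.eventually (gt_mem_nhds hε')).exists
  obtain ⟨K, hK, M, hM, hmod⟩ := exists_modulus_finite hc S hpred f hf M₀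
  have hεpos : (0 : ℝ) < ε := by exact_mod_cast hε0
  set R : ℝ := Real.log 4 * (Fintype.card T * M) with hR
  have hR0 : 0 ≤ R := by positivity
  have hbd := exists_boundary F hF K (ε / 2 / (R + 1)) (by positivity)
  obtain ⟨i, ⟨hbig, hDi⟩, B, hB, hBcard⟩ := (hgood.and_eventually hbd).exists
  have hFpos : (0 : ℝ) < (F i).card := by exact_mod_cast (hF.1 i).card_pos
  have hne : (E i).Nonempty := by
    rw [Finset.nonempty_iff_ne_empty]
    intro h
    rw [h] at hbig
    simp only [Finset.card_empty, Nat.cast_zero, Real.log_zero] at hbig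
    nlinarith
  have hfinal := log_card_separated_le S hS f Q hQ hM K hK hmod (F i) B hB (E i) hne
    (fun x hx y hy hxy => by
      obtain ⟨g, hg, hgr⟩ := hEsep i x hx y hy hxy
      exact ⟨g, hg, hsep _ _ hgr⟩) (D * (F i).card) (by positivity) hDi
  have e1 : Real.log 4 * (D * (F i).card / (M₀ + 1) + Fintype.card T * M * B.card)
      + ((F i).card * Fintype.card T) * ((2 * Q + 1) * (1 / 2) ^ M₀)
      = (F i).card * (Real.log 4 * (D / (M₀ + 1))
        + Fintype.card T * ((2 * Q + 1) * (1 / 2) ^ M₀)) + R * B.card := by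
    rw [hR]; ring
  rw [e1] at hfinal
  have e2 : R * B.card ≤ ε / 2 * (F i).card := by
    have h1 : R * B.card ≤ (R + 1) * B.card := by
      have : (0 : ℝ) ≤ B.card := by positivity
      nlinarith
    refine h1.trans ?_
    have h2 := mul_le_mul_of_nonneg_left hBcard.le (show 0 ≤ R + 1 by linarith)
    refine h2.trans (le_of_eq ?_)
    field_simp
  have e3 := mul_lt_mul_of_pos_left hM₀ hFpos
  linarith
end

section
/- Let Γ be a countable amenable group. Then every invariant random order on Γ can be extended to an invariant random total order on Γ; that is, for every Γ-invariant Borel probability measure ν on Ord(Γ) there exist a Γ-invariant Borel probability measure ν̃ on TotOrd(Γ) and a joining λ of ν and ν̃ such that λ({(≺, ≺̃) : for all x,y ∈ Γ, x ≺ y ⟹ x ≺̃ y}) = 1. -/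
/-!
A measurable, but not equivariant, choice of linear extension is made first and then averaged
along the Følner sequence.

*Linear extension.* Fix a surjection `e : ℕ → Γ`. To `x` associate the indicator sequence of its
lower set `{z | z = x ∨ z ≺ x}`, read through `e`, and compare two points by the lexicographic order
of these sequences. Antisymmetry of `≺` makes the coding injective, so the result is a total order;
`x ≺ y` makes the lower set of `x` a proper subset of that of `y`, so the total order extends `≺`.
Each comparison is a countable Boolean combination of coordinates of `≺`, hence the map `linExt e`
is measurable, and the law of `(≺, linExt e ≺)` is a probability measure carried by the closed,
`Γ`-invariant set `extPairs Γ` of pairs (order, total extension).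

*Averaging.* `exists_invariant_limit` averages a probability measure on a compact space along a
Følner sequence and takes an ultrafilter limit in the (compact) space of probability measures. The
limit is invariant by the Følner condition, it still gives full mass to the closed set `extPairs Γ`,
and it keeps the first marginal `ν` because `ν` is invariant. Its second marginal is the required
invariant random total order.
-/

open Filter MeasureTheory

/-- The set of partial orders on `Γ` inside the space `2^(Γ×Γ)` of binary relations. -/
def ordSet (Γ : Type*) [Group Γ] : Set (Γ × Γ → Bool) :=
  {R | (∀ x y : Γ, R (x, y) = true → R (y, x) = false) ∧
       (∀ x y z : Γ, R (x, y) = true → R (y, z) = true → R (x, z) = true)}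

/-- The set of total orders on `Γ`. -/
def totOrdSet (Γ : Type*) [Group Γ] : Set (Γ × Γ → Bool) :=
  ordSet Γ ∩ {R | ∀ x y : Γ, x ≠ y → R (x, y) = true ∨ R (y, x) = true}

/-- The `Γ`-action on binary relations: `x (g·R) y ↔ (xg) R (yg)`. -/
def relAct {Γ : Type*} [Group Γ] (g : Γ) (R : Γ × Γ → Bool) : Γ × Γ → Bool :=
  fun p => R (p.1 * g, p.2 * g)

/-- An invariant random order on `Γ`. -/
def IsInvRandomOrder {Γ : Type*} [Group Γ] (ν : Measure (Γ × Γ → Bool)) : Prop :=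
  IsProbabilityMeasure ν ∧ ν (ordSet Γ) = 1 ∧ ∀ g : Γ, Measure.map (relAct g) ν = ν

/-- An invariant random total order on `Γ`. -/
def IsInvRandomTotalOrder {Γ : Type*} [Group Γ] (ν : Measure (Γ × Γ → Bool)) : Prop :=
  IsProbabilityMeasure ν ∧ ν (totOrdSet Γ) = 1 ∧ ∀ g : Γ, Measure.map (relAct g) ν = ν

open Topology BoundedContinuousFunction

/-! ### Averaging along a Følner sequence -/

lemma folner_sum_bound {Γ : Type*} [Group Γ] (F : Finset Γ) (g : Γ) (φ : Γ → ℝ) (C : ℝ)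
    (hφ : ∀ h, |φ h| ≤ C) :
    |∑ h ∈ F, φ (g * h) - ∑ h ∈ F, φ h| ≤
      2 * C * (((fun h => g * h) '' ↑F \ (↑F : Set Γ)).ncard : ℝ) := by
  classical
  set G : Finset Γ := F.image (fun h => g * h) with hG
  have hinj : Function.Injective (fun h : Γ => g * h) := mul_right_injective g
  have hncard : ((fun h => g * h) '' ↑F \ (↑F : Set Γ)).ncard = (G \ F).card := by
    rw [← Set.ncard_coe_finset]
    simp [hG]
  have hcard : (F \ G).card = (G \ F).card :=
    Finset.card_sdiff_comm (by rw [hG, Finset.card_image_of_injective _ hinj])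
  have hsum : ∑ h ∈ F, φ (g * h) = ∑ h ∈ G, φ h := by
    rw [hG, Finset.sum_image (fun a _ b _ hab => hinj hab)]
  have bound : ∀ s : Finset Γ, |∑ h ∈ s, φ h| ≤ s.card * C := fun s =>
    (Finset.abs_sum_le_sum_abs _ _).trans
      ((Finset.sum_le_card_nsmul _ _ _ fun h _ => hφ h).trans_eq (nsmul_eq_mul _ _))
  rw [hsum, ← Finset.sum_sdiff_sub_sum_sdiff, hncard]
  have h1 := bound (G \ F)
  have h2 := bound (F \ G)
  rw [hcard] at h2
  calc _ ≤ |∑ h ∈ G \ F, φ h| + |∑ h ∈ F \ G, φ h| := abs_sub _ _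
    _ ≤ _ := by linarith

/-- The average of the pushforwards of `μ` under the maps `a h`, `h ∈ F`. -/
noncomputable def avgMeasure {Γ X : Type*} [MeasurableSpace X] (a : Γ → X → X) (μ : Measure X)
    (F : Finset Γ) : Measure X :=
  (F.card : ENNReal)⁻¹ • ∑ h ∈ F, μ.map (a h)

lemma avgMeasure_apply_eq_one {Γ X : Type*} [MeasurableSpace X] {a : Γ → X → X} {μ : Measure X}
    {F : Finset Γ} (hF : F.Nonempty) (ha : ∀ h, Measurable (a h)) {K : Set X}
    (hK : MeasurableSet K) (hμ : ∀ h, μ (a h ⁻¹' K) = 1) : avgMeasure a μ F K = 1 := by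
  have h0 : (F.card : ENNReal) ≠ 0 := by simpa using hF.ne_empty
  simp only [avgMeasure, Measure.smul_apply, Measure.finsetSum_apply, smul_eq_mul]
  rw [Finset.sum_congr rfl fun h _ => (Measure.map_apply (ha h) hK).trans (hμ h)]
  simpa using ENNReal.inv_mul_cancel h0 (ENNReal.natCast_ne_top _)

lemma integral_avgMeasure {Γ X : Type*} [TopologicalSpace X] [MeasurableSpace X] [BorelSpace X]
    {a : Γ → X → X} (ha : ∀ h, Continuous (a h)) (μ : Measure X) [IsProbabilityMeasure μ]
    (F : Finset Γ) (f : X →ᵇ ℝ) :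
    ∫ x, f x ∂(avgMeasure a μ F) = (F.card : ℝ)⁻¹ * ∑ h ∈ F, ∫ x, f (a h x) ∂μ := by
  have hprob : ∀ h, IsProbabilityMeasure (μ.map (a h)) := fun h =>
    Measure.isProbabilityMeasure_map (ha h).measurable.aemeasurable
  rw [avgMeasure, integral_smul_measure, integral_finsetSum_measure fun h _ => f.integrable _]
  simp only [smul_eq_mul, ENNReal.toReal_inv, ENNReal.toReal_natCast]
  congr 1
  refine Finset.sum_congr rfl fun h _ => ?_
  exact integral_map (ha h).measurable.aemeasurable f.continuous.stronglyMeasurable.aestronglyMeasurable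

/-- For an action of an amenable group by continuous maps of a compact space, a limit of Følner
averages of `μ₀` is invariant, is carried by every closed set that carries all translates of `μ₀`,
and assigns integral `c` to each continuous function whose integral against every translate of `μ₀`
is `c`. -/
lemma exists_invariant_limit {Γ X : Type*} [Group Γ] [TopologicalSpace X] [CompactSpace X]
    [T2Space X] [MeasurableSpace X] [BorelSpace X] [HasOuterApproxClosed X]
    {F : ℕ → Finset Γ} (hF : IsFolner F) {a : Γ → X → X} (ha : ∀ h, Continuous (a h))
    (hmul : ∀ g h x, a (g * h) x = a g (a h x)) (μ₀ : Measure X) [IsProbabilityMeasure μ₀] :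
    ∃ μ : Measure X, IsProbabilityMeasure μ ∧ (∀ g, μ.map (a g) = μ) ∧
      (∀ K : Set X, IsClosed K → (∀ g, μ₀ (a g ⁻¹' K) = 1) → μ K = 1) ∧
      (∀ (f : X →ᵇ ℝ) (c : ℝ), (∀ g, ∫ x, f (a g x) ∂μ₀ = c) → ∫ x, f x ∂μ = c) := by
  have hprob : ∀ i, IsProbabilityMeasure (avgMeasure a μ₀ (F i)) := fun i =>
    ⟨avgMeasure_apply_eq_one (hF.1 i) (fun h => (ha h).measurable) MeasurableSet.univ (by simp)⟩
  let m : ℕ → ProbabilityMeasure X := fun i => ⟨avgMeasure a μ₀ (F i), hprob i⟩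
  let U : Ultrafilter ℕ := hyperfilter ℕ
  have hU : (U : Filter ℕ) ≤ atTop := Nat.hyperfilter_le_atTop
  obtain ⟨μ, -, hμ⟩ := isCompact_univ.ultrafilter_le_nhds (U.map m) (by simp)
  have hlim : Tendsto m U (𝓝 μ) := hμ
  have hint : ∀ f : X →ᵇ ℝ, Tendsto
      (fun i => ((F i).card : ℝ)⁻¹ * ∑ h ∈ F i, ∫ x, f (a h x) ∂μ₀) U
      (𝓝 (∫ x, f x ∂(μ : Measure X))) := fun f => by
    have := ProbabilityMeasure.tendsto_iff_forall_integral_tendsto.1 hlim f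
    simpa only [m, ProbabilityMeasure.coe_mk, integral_avgMeasure ha] using this
  refine ⟨μ, inferInstance, fun g => ?_, fun K hK h1 => ?_, fun f c hc => ?_⟩
  · have := Measure.isProbabilityMeasure_map (μ := (μ : Measure X)) (ha g).measurable.aemeasurable
    refine ext_of_forall_integral_eq_of_IsFiniteMeasure fun f => ?_
    rw [integral_map (ha g).measurable.aemeasurable
      f.continuous.stronglyMeasurable.aestronglyMeasurable]
    let φ : Γ → ℝ := fun h => ∫ x, f (a h x) ∂μ₀
    have hφ : ∀ h, |φ h| ≤ ‖f‖ := fun h => by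
      simpa using norm_integral_le_of_norm_le_const (μ := μ₀)
        (Eventually.of_forall fun x => f.norm_coe_le_norm (a h x))
    have h1 := hint (f.compContinuous ⟨a g, ha g⟩)
    have h2 := hint f
    simp only [compContinuous_apply, ContinuousMap.coe_mk, ← hmul] at h1
    have h3 := h1.sub h2
    have h4 := (hF.2 g).const_mul (2 * ‖f‖)
    rw [mul_zero] at h4
    refine sub_eq_zero.1 (tendsto_nhds_unique h3 (squeeze_zero_norm (fun i => ?_) (h4.mono_left hU)))
    rw [← mul_sub, norm_mul, norm_inv, Real.norm_natCast, Real.norm_eq_abs]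
    have := folner_sum_bound (F i) g φ ‖f‖ hφ
    calc _ ≤ ((F i).card : ℝ)⁻¹ * _ := mul_le_mul_of_nonneg_left this (by positivity)
      _ = _ := by ring
  · refine le_antisymm prob_le_one ?_
    have hm : ∀ i, (m i : Measure X) K = 1 := fun i =>
      avgMeasure_apply_eq_one (hF.1 i) (fun h => (ha h).measurable) hK.measurableSet h1
    have := FiniteMeasure.limsup_measure_closed_le_of_tendsto
      ((ProbabilityMeasure.tendsto_nhds_iff_toFiniteMeasure_tendsto_nhds _).1 hlim) hK
    simpa [hm] using this
  · refine tendsto_nhds_unique (hint f) (tendsto_const_nhds.congr fun i => ?_)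
    have h0 : ((F i).card : ℝ) ≠ 0 := by simpa using (hF.1 i).ne_empty
    simp [hc, h0]

/-! ### A measurable linear extension -/

/-- The indicator sequence of the lower set `{z | z = x ∨ z R x}`, read through `e`. -/
noncomputable def lowerCode {Γ : Type*} (e : ℕ → Γ) (R : Γ × Γ → Bool) (x : Γ) : ℕ → Bool :=
  open Classical in fun n => decide (e n = x) || R (e n, x)

/-- The relation comparing points by the lexicographic order of their lower-set codes. -/
noncomputable def linExt {Γ : Type*} (e : ℕ → Γ) (R : Γ × Γ → Bool) : Γ × Γ → Bool :=
  open Classical in fun p => decide (toLex (lowerCode e R p.1) < toLex (lowerCode e R p.2))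

lemma lowerCode_eq_true {Γ : Type*} {e : ℕ → Γ} {R : Γ × Γ → Bool} {x : Γ} {n : ℕ} :
    lowerCode e R x n = true ↔ e n = x ∨ R (e n, x) = true := by
  simp [lowerCode]

lemma lowerCode_injective {Γ : Type*} [Group Γ] {e : ℕ → Γ} (he : Function.Surjective e)
    {R : Γ × Γ → Bool} (hR : R ∈ ordSet Γ) : Function.Injective (lowerCode e R) := by
  intro x y hxy
  obtain ⟨n, rfl⟩ := he x
  obtain ⟨k, rfl⟩ := he y
  by_contra hne
  have h1 : lowerCode e R (e k) n = true := hxy ▸ lowerCode_eq_true.2 (Or.inl rfl)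
  have h2 : lowerCode e R (e n) k = true := hxy ▸ lowerCode_eq_true.2 (Or.inl rfl)
  have h1' := (lowerCode_eq_true.1 h1).resolve_left hne
  have h2' := (lowerCode_eq_true.1 h2).resolve_left (Ne.symm hne)
  simp [hR.1 _ _ h1'] at h2'

lemma linExt_mem_totOrdSet {Γ : Type*} [Group Γ] {e : ℕ → Γ} (he : Function.Surjective e)
    {R : Γ × Γ → Bool} (hR : R ∈ ordSet Γ) : linExt e R ∈ totOrdSet Γ := by
  refine ⟨⟨fun x y h => ?_, fun x y z h1 h2 => ?_⟩, fun x y hne => ?_⟩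
  · simp only [linExt, decide_eq_true_eq, decide_eq_false_iff_not] at h ⊢
    exact h.asymm
  · simp only [linExt, decide_eq_true_eq] at h1 h2 ⊢
    exact h1.trans h2
  · simp only [linExt, decide_eq_true_eq]
    exact lt_or_gt_of_ne fun h => hne (lowerCode_injective he hR (toLex.injective h))

lemma linExt_extends {Γ : Type*} [Group Γ] {e : ℕ → Γ} (he : Function.Surjective e)
    {R : Γ × Γ → Bool} (hR : R ∈ ordSet Γ) {x y : Γ} (hxy : R (x, y) = true) :
    linExt e R (x, y) = true := by
  simp only [linExt, decide_eq_true_eq]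
  refine Pi.toLex_strictMono (lt_of_le_of_ne (fun n => ?_) fun h => ?_)
  · rw [Bool.le_iff_imp]
    intro hn
    rw [lowerCode_eq_true] at hn ⊢
    rcases hn with rfl | hn
    · exact Or.inr hxy
    · exact Or.inr (hR.2 _ _ _ hn hxy)
  · obtain rfl := lowerCode_injective he hR h
    simpa [hxy] using hR.1 _ _ hxy

lemma measurable_linExt {Γ : Type*} (e : ℕ → Γ) : Measurable (linExt e) := by
  have hcode : ∀ x n, Measurable fun R : Γ × Γ → Bool => lowerCode e R x n := fun x n => by
    classical
    exact (measurable_of_countable (fun b : Bool => decide (e n = x) || b)).comp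
      (measurable_pi_apply (e n, x))
  refine measurable_pi_lambda _ fun p => measurable_to_bool ?_
  have : (fun R => linExt e R p) ⁻¹' {true} =
      {R | ∃ n, (∀ k < n, lowerCode e R p.1 k = lowerCode e R p.2 k) ∧
        lowerCode e R p.1 n < lowerCode e R p.2 n} := by
    ext R
    simp only [linExt, Set.mem_preimage, Set.mem_singleton_iff, decide_eq_true_eq]
    rfl
  rw [this]
  simp only [Set.ofPred_exists, Set.ofPred_and, Set.ofPred_forall]
  exact MeasurableSet.iUnion fun n => MeasurableSet.inter
    (MeasurableSet.iInter fun k => MeasurableSet.iInter fun _ =>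
      measurableSet_eq_fun (hcode _ _) (hcode _ _))
    ((hcode p.1 n).prodMk (hcode p.2 n)
      (MeasurableSet.of_discrete (s := {b : Bool × Bool | b.1 < b.2})))

/-! ### Pairs of an order and a total extension -/

/-- The set of pairs `(≺, ≺')` with `≺` a partial order and `≺'` a total order extending it. -/
def extPairs (Γ : Type*) [Group Γ] : Set ((Γ × Γ → Bool) × (Γ × Γ → Bool)) :=
  {p | p.1 ∈ ordSet Γ ∧ p.2 ∈ totOrdSet Γ ∧ ∀ x y : Γ, p.1 (x, y) = true → p.2 (x, y) = true}

lemma isClosed_ordSet (Γ : Type*) [Group Γ] : IsClosed (ordSet Γ) := by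
  have hc : ∀ (q : Γ × Γ) (b : Bool), IsClopen {R : Γ × Γ → Bool | R q = b} := fun q b =>
    (isClopen_discrete {b}).preimage (continuous_apply q)
  simp only [ordSet, Set.ofPred_and, Set.ofPred_forall]
  exact (isClosed_iInter fun x => isClosed_iInter fun y =>
      isClosed_imp (hc _ _).isOpen (hc _ _).isClosed).inter
    (isClosed_iInter fun x => isClosed_iInter fun y => isClosed_iInter fun z =>
      isClosed_imp (hc _ _).isOpen (isClosed_imp (hc _ _).isOpen (hc _ _).isClosed))

lemma isClosed_totOrdSet (Γ : Type*) [Group Γ] : IsClosed (totOrdSet Γ) := by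
  have hc : ∀ (q : Γ × Γ) (b : Bool), IsClosed {R : Γ × Γ → Bool | R q = b} := fun q b =>
    isClosed_eq (continuous_apply q) continuous_const
  simp only [totOrdSet, Set.ofPred_forall, Set.ofPred_or]
  exact (isClosed_ordSet Γ).inter <| isClosed_iInter fun x => isClosed_iInter fun y => isClosed_iInter fun _ =>
    (hc _ _).union (hc _ _)

lemma isClosed_extPairs (Γ : Type*) [Group Γ] : IsClosed (extPairs Γ) := by
  have hc : ∀ q : Γ × Γ, IsClopen {R : Γ × Γ → Bool | R q = true} := fun q =>
    (isClopen_discrete {true}).preimage (continuous_apply q)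
  simp only [extPairs, Set.ofPred_and, Set.ofPred_forall]
  refine ((isClosed_ordSet Γ).preimage continuous_fst).inter
    (((isClosed_totOrdSet Γ).preimage continuous_snd).inter ?_)
  exact isClosed_iInter fun x => isClosed_iInter fun y => isClosed_imp
    ((hc (x, y)).isOpen.preimage continuous_fst) ((hc (x, y)).isClosed.preimage continuous_snd)

lemma continuous_relAct {Γ : Type*} [Group Γ] (g : Γ) :
    Continuous (relAct g : (Γ × Γ → Bool) → Γ × Γ → Bool) :=
  continuous_pi fun _ => continuous_apply _

lemma relAct_mem_ordSet {Γ : Type*} [Group Γ] (g : Γ) {R : Γ × Γ → Bool} (hR : R ∈ ordSet Γ) :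
    relAct g R ∈ ordSet Γ :=
  ⟨fun _ _ h => hR.1 _ _ h, fun _ _ _ h1 h2 => hR.2 _ _ _ h1 h2⟩

lemma relAct_mem_totOrdSet {Γ : Type*} [Group Γ] (g : Γ) {R : Γ × Γ → Bool}
    (hR : R ∈ totOrdSet Γ) : relAct g R ∈ totOrdSet Γ :=
  ⟨relAct_mem_ordSet g hR.1, fun _ _ hne => hR.2 _ _ fun h => hne (mul_right_cancel h)⟩

/-- **Every invariant random order on a countable amenable group extends to an invariant
random total order**: there are an invariant random total order `ν'` and a joining `lam`
of `ν` and `ν'` (a probability measure on `Ord(Γ) × Ord(Γ)`, invariant under the diagonal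
`Γ`-action, with marginals `ν` and `ν'`), concentrated on pairs `(≺, ≺')` with `≺ ⊆ ≺'`. -/
theorem inv_random_order_extends_to_total
    {Γ : Type*} [Group Γ] [Countable Γ]
    (hamen : ∃ F : ℕ → Finset Γ, IsFolner F)
    (ν : Measure (Γ × Γ → Bool)) (hν : IsInvRandomOrder ν) :
    ∃ (ν' : Measure (Γ × Γ → Bool)) (lam : Measure ((Γ × Γ → Bool) × (Γ × Γ → Bool))),
      IsInvRandomTotalOrder ν' ∧
      IsProbabilityMeasure lam ∧
      (∀ g : Γ, Measure.map (fun p : (Γ × Γ → Bool) × (Γ × Γ → Bool) =>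
          (relAct g p.1, relAct g p.2)) lam = lam) ∧
      Measure.map Prod.fst lam = ν ∧
      Measure.map Prod.snd lam = ν' ∧
      lam {p : (Γ × Γ → Bool) × (Γ × Γ → Bool) |
        ∀ x y : Γ, p.1 (x, y) = true → p.2 (x, y) = true} = 1 := by
  obtain ⟨F, hF⟩ := hamen
  obtain ⟨hprob, hord, hinv⟩ := hν
  obtain ⟨e, he⟩ := exists_surjective_nat Γ
  have hpair : Measurable fun R : Γ × Γ → Bool => (R, linExt e R) :=
    measurable_id.prodMk (measurable_linExt e)
  let a : Γ → (Γ × Γ → Bool) × (Γ × Γ → Bool) → (Γ × Γ → Bool) × (Γ × Γ → Bool) :=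
    fun g p => (relAct g p.1, relAct g p.2)
  have ha : ∀ g, Continuous (a g) := fun g =>
    ((continuous_relAct g).comp continuous_fst).prodMk ((continuous_relAct g).comp continuous_snd)
  have hmul : ∀ g h p, a (g * h) p = a g (a h p) := fun g h p => by
    simp [a, relAct, mul_assoc, funext_iff]
  have : IsProbabilityMeasure (ν.map fun R => (R, linExt e R)) :=
    Measure.isProbabilityMeasure_map hpair.aemeasurable
  obtain ⟨lam, hlam, hlaminv, hclosed, hfun⟩ :=
    exists_invariant_limit hF ha hmul (ν.map fun R => (R, linExt e R))
  have hK : lam (extPairs Γ) = 1 := by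
    refine hclosed _ (isClosed_extPairs Γ) fun g => le_antisymm prob_le_one ?_
    rw [Measure.map_apply hpair ((isClosed_extPairs Γ).preimage (ha g)).measurableSet, ← hord]
    exact measure_mono fun R hR => ⟨relAct_mem_ordSet g hR,
      relAct_mem_totOrdSet g (linExt_mem_totOrdSet he hR), fun x y h => linExt_extends he hR h⟩
  have hfst : lam.map Prod.fst = ν := by
    have := Measure.isProbabilityMeasure_map (μ := lam)
      (measurable_fst (α := Γ × Γ → Bool) (β := Γ × Γ → Bool)).aemeasurable
    refine ext_of_forall_integral_eq_of_IsFiniteMeasure fun f => ?_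
    rw [integral_map measurable_fst.aemeasurable
      f.continuous.stronglyMeasurable.aestronglyMeasurable]
    refine hfun (f.compContinuous ⟨Prod.fst, continuous_fst⟩) _ fun g => ?_
    refine (integral_map hpair.aemeasurable
      (((f.compContinuous ⟨Prod.fst, continuous_fst⟩).continuous.comp
        (ha g)).stronglyMeasurable.aestronglyMeasurable)).trans ?_
    conv_rhs => rw [← hinv g]
    rw [integral_map (continuous_relAct g).measurable.aemeasurable
      f.continuous.stronglyMeasurable.aestronglyMeasurable]
    rfl
  refine ⟨lam.map Prod.snd, lam, ⟨Measure.isProbabilityMeasure_map measurable_snd.aemeasurable,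
    ?_, fun g => ?_⟩, hlam, hlaminv, hfst, rfl, ?_⟩
  · have := Measure.isProbabilityMeasure_map (μ := lam)
      (measurable_snd (α := Γ × Γ → Bool) (β := Γ × Γ → Bool)).aemeasurable
    refine le_antisymm prob_le_one ?_
    rw [Measure.map_apply measurable_snd (isClosed_totOrdSet Γ).measurableSet, ← hK]
    exact measure_mono fun p hp => hp.2.1
  · conv_rhs => rw [← hlaminv g]
    rw [Measure.map_map (continuous_relAct g).measurable measurable_snd,
      Measure.map_map measurable_snd (ha g).measurable]
    rfl
  · refine le_antisymm prob_le_one ?_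
    rw [← hK]
    exact measure_mono fun p hp => hp.2.2
end
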